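/- Lemma 3.5 (lem: 3.3): Fix 0 ≤ l ≤ m and let S ⊆ V^⊗l be a simple H(B_l)-submodule under Ψ_l^V (i.e. S ≠ 0, S·Ψ_l^V(h) ⊆ S for all h ∈ H(B_l), and the only Ψ_l^V-stable subspaces of S are 0 and S). Then the subspace D = Σ_{I,J} Ψ(ω_{I,J}⁻¹)(S ⊗ η_{r+3/2}^⊗(m−l)) of V̄^⊗m, where the sum runs over all I ⊆ {1,…,m} with #I = l and J ⊆ {1,…,m} ∖ I, is a simple 𝓗_m-submodule of V̄^⊗m under Ξ: D ≠ 0, Ξ(h)D ⊆ D for all h ∈ 𝓗_m, and the only Ξ(𝓗_m)-stable subspaces of D are 0 and D. -/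

import Mathlib

/-!
Two words in the letters `η_j` have the same type if they have the same positions of inner
letters, of `η_{-r-3/2}` and of `η_{r+3/2}`; the types with `l` inner positions index the
summands `V̄_{I,J}` of `V̄_l`. Reading off the inner letters in order identifies each `V̄_{I,J}`
with `V^{⊗l} ⊗ η_{r+3/2}^{⊗(m-l)}`, and the image of the `V̄_{I,J}`-component of `v` is called the
slice of `v` (`slc`). A Hecke generator either acts inside a slice as a generator of the type `B_l`
Hecke algebra (`slc_Rsw_inner`, `slc_R0_inner`), or permutes the slices up to adding a multiple of
the slice itself (`slc_Rsw`, `slc_R0`). This is the description of `V̄_l` as the module induced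
from the parabolic subalgebra of type `B_l × A_{m-l-1}`, in coordinates.

Let `glue l S` be the space of vectors of `V̄_l` with all slices in `S`. It is stable under the
Hecke generators, and it meets `V^{⊗l} ⊗ η_{r+3/2}^{⊗(m-l)}` exactly in `S` (`glue_inf_Vsub`).
Since `Ψ(ω_{I,J})` preserves `glue l S` and carries `V̄_{I,J}` onto `V^{⊗l} ⊗ η_{r+3/2}^{⊗(m-l)}`,
the space `Ψ(ω_{I,J}⁻¹)(S)` is the `V̄_{I,J}`-component of `glue l S`, whatever the choice of `ω`;
hence `D = glue l S` (`iSup_eq_glue`). The elements `x_σ^{(l')}` act through the projection onto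
`V^{⊗l'} ⊗ η_{r+3/2}^{⊗(m-l')}` (`Xg_apply`), so `D` is stable under the duplex Hecke algebra.

For simplicity, let `U ⊆ D` be a nonzero stable subspace. All types with `l` inner positions are
connected by the Hecke generators, so the projection of `U` onto `V^{⊗l} ⊗ η_{r+3/2}^{⊗(m-l)}`
cannot vanish (`slc_zero_all`). That projection is the action of `x_e^{(l)}`, so `U ⊓ S ≠ 0`, hence
`S ⊆ U` by simplicity of `S`, and applying the operators `Ψ(ω_{I,J}⁻¹)` gives `D ⊆ U`.
-/

noncomputable section

open scoped BigOperators

set_option maxHeartbeats 1000000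
set_option synthInstance.maxHeartbeats 400000

/-- The field `ℚ(q)`. -/
abbrev Kq : Type := RatFunc ℚ

/-- The element `q`, transcendental over `ℚ`. -/
def qv : Kq := RatFunc.X

/-- Index set `𝕀(2r+4)`: the `j`-th element represents the half-integer `j - r - 3/2`. -/
abbrev Idx (r : ℕ) := Fin (2*r+4)

/-- The space `V̄`, with basis `η_j` indexed by `𝕀(2r+4)` (coordinate form). -/
abbrev Vb (r : ℕ) := Idx r → Kq

/-- The tensor power `V̄^⊗m` (coordinates with respect to the basis `M_f`). -/
abbrev TP (r m : ℕ) := (Fin m → Idx r) → Kq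

/-- Basis vector `M_f = η_{f 0} ⊗ ⋯ ⊗ η_{f (m-1)}`. -/
def Mf {r m : ℕ} (f : Fin m → Idx r) : TP r m := Pi.single f 1

/-- For a quantum-group index `a : Fin (2r+3)` (representing `i = a - r - 1 ∈ [-r-1, r+1]`),
the index of `η_{i - 1/2}`. -/
def loI {r : ℕ} (a : Fin (2*r+3)) : Idx r := ⟨a.1, by have := a.2; omega⟩

/-- The index of `η_{i + 1/2}`. -/
def hiI {r : ℕ} (a : Fin (2*r+3)) : Idx r := ⟨a.1+1, by have := a.2; omega⟩

/-- The index of `η_{-r-3/2}`. -/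
def botI (r : ℕ) : Idx r := ⟨0, by omega⟩

/-- The index of `η_{r+3/2}`. -/
def topI (r : ℕ) : Idx r := ⟨2*r+3, by omega⟩

/-- A linear endomorphism of `V̄` of the shape `v ↦ (j ↦ c j * v (t j))`. -/
def diagMove (r : ℕ) (c : Idx r → Kq) (t : Idx r → Idx r) : Module.End Kq (Vb r) where
  toFun v := fun j => c j * v (t j)
  map_add' u v := by funext j; simp [Pi.add_apply, mul_add]
  map_smul' s v := by
    funext j
    simp only [Pi.smul_apply, smul_eq_mul, RingHom.id_apply]
    ring

/-- The operator `e_i` on `V̄`: `e_i η_{i+1/2} = η_{i-1/2}`, zero on other basis vectors. -/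
def opE (r : ℕ) (a : Fin (2*r+3)) : Module.End Kq (Vb r) :=
  diagMove r (fun j => if j = loI a then 1 else 0) (fun j => if j = loI a then hiI a else j)

/-- The operator `f_i` on `V̄`: `f_i η_{i-1/2} = η_{i+1/2}`, zero on other basis vectors. -/
def opF (r : ℕ) (a : Fin (2*r+3)) : Module.End Kq (Vb r) :=
  diagMove r (fun j => if j = hiI a then 1 else 0) (fun j => if j = hiI a then loI a else j)

/-- The operator `κ_i` on `V̄`. -/
def opK (r : ℕ) (a : Fin (2*r+3)) : Module.End Kq (Vb r) :=
  diagMove r (fun j => if j = loI a then qv else if j = hiI a then qv⁻¹ else 1) id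

/-- The operator `κ_i⁻¹` on `V̄`. -/
def opKinv (r : ℕ) (a : Fin (2*r+3)) : Module.End Kq (Vb r) :=
  diagMove r (fun j => if j = loI a then qv⁻¹ else if j = hiI a then qv else 1) id

/-- A linear endomorphism of `V̄^⊗m` given by a "matrix" `c`. -/
def matOp (r m : ℕ) (c : (Fin m → Idx r) → (Fin m → Idx r) → Kq) : Module.End Kq (TP r m) where
  toFun v := fun g => ∑ f : Fin m → Idx r, c g f * v f
  map_add' u v := by
    funext g
    simp [Pi.add_apply, mul_add, Finset.sum_add_distrib]
  map_smul' s v := by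
    funext g
    simp only [Pi.smul_apply, smul_eq_mul, RingHom.id_apply, Finset.mul_sum]
    exact Finset.sum_congr rfl (fun f _ => by ring)

/-- The tensor product `A 0 ⊗ A 1 ⊗ ⋯ ⊗ A (m-1)` of endomorphisms of `V̄`,
as an endomorphism of `V̄^⊗m`. -/
def tensorOp (r m : ℕ) (A : Fin m → Module.End Kq (Vb r)) : Module.End Kq (TP r m) :=
  matOp r m (fun g f => ∏ k : Fin m, (A k) (Pi.single (f k) 1) (g k))
/-- `𝔼_i = Σ_j id^{⊗(j-1)} ⊗ e_i ⊗ (κ_i⁻¹)^{⊗(m-j)}` on `V̄^⊗m`. -/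
def opEE (r m : ℕ) (a : Fin (2*r+3)) : Module.End Kq (TP r m) :=
  ∑ j : Fin m, tensorOp r m (fun k =>
    if (k : ℕ) < (j : ℕ) then 1 else if k = j then opE r a else opKinv r a)

/-- `𝔽_i = Σ_j κ_i^{⊗(j-1)} ⊗ f_i ⊗ id^{⊗(m-j)}` on `V̄^⊗m`. -/
def opFF (r m : ℕ) (a : Fin (2*r+3)) : Module.End Kq (TP r m) :=
  ∑ j : Fin m, tensorOp r m (fun k =>
    if (k : ℕ) < (j : ℕ) then opK r a else if k = j then opF r a else 1)

/-- `𝕂_i = κ_i^{⊗m}`. -/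
def opKK (r m : ℕ) (a : Fin (2*r+3)) : Module.End Kq (TP r m) :=
  tensorOp r m (fun _ => opK r a)

/-- `𝕂_i⁻¹ = (κ_i⁻¹)^{⊗m}`. -/
def opKKinv (r m : ℕ) (a : Fin (2*r+3)) : Module.End Kq (TP r m) :=
  tensorOp r m (fun _ => opKinv r a)

/-- `𝕜_i = 𝕂_i 𝕂_{-i}⁻¹` (the index `-i` corresponds to `Fin.rev a`). -/
def opkk (r m : ℕ) (a : Fin (2*r+3)) : Module.End Kq (TP r m) :=
  opKK r m a * opKKinv r m a.rev

/-- `𝕜_i⁻¹ = 𝕂_{-i} 𝕂_i⁻¹`. -/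
def opkkInv (r m : ℕ) (a : Fin (2*r+3)) : Module.End Kq (TP r m) :=
  opKK r m a.rev * opKKinv r m a

/-- The index `a` corresponding to `i = 0`. -/
def midI (r : ℕ) : Fin (2*r+3) := ⟨r+1, by omega⟩

/-- `ℬ_i = 𝔼_i + 𝔽_{-i} 𝕂_i⁻¹` for `i ≠ 0`. -/
def opB (r m : ℕ) (a : Fin (2*r+3)) : Module.End Kq (TP r m) :=
  opEE r m a + opFF r m a.rev * opKKinv r m a

/-- `ℬ_0 = 𝔼_0 + q 𝔽_0 𝕂_0⁻¹ + 𝕂_0⁻¹`. -/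
def opB0 (r m : ℕ) : Module.End Kq (TP r m) :=
  opEE r m (midI r) + qv • (opFF r m (midI r) * opKKinv r m (midI r)) + opKKinv r m (midI r)

/-- Generating set of the Levi-type ıquantum group image `Φ(L_q^ı)`:
`ℬ_0`, the `ℬ_i` with `0 ≠ i`, `-r ≤ i ≤ r`, and the `𝕜_i^{±1}` with `-r-1 ≤ i ≤ r+1`. -/
def LeviSet (r m : ℕ) : Set (Module.End Kq (TP r m)) :=
  {opB0 r m} ∪ (opB r m '' {a | a ≠ midI r ∧ 0 < (a : ℕ) ∧ (a : ℕ) < 2*r+2}) ∪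
    Set.range (opkk r m) ∪ Set.range (opkkInv r m)

/-- `Φ(L_q^ı)`, the image of the Levi-type ıquantum group in `End(V̄^⊗m)`. -/
def PhiL (r m : ℕ) : Subalgebra Kq (Module.End Kq (TP r m)) :=
  Algebra.adjoin Kq (LeviSet r m)

/-- The operator `Ψ(H_0)` on `V̄^⊗m`. -/
def R0op (r m : ℕ) : Module.End Kq (TP r m) :=
  if h : 0 < m then
    { toFun := fun v g =>
        v (Function.update g ⟨0, h⟩ (Fin.rev (g ⟨0, h⟩))) +
          (if g ⟨0, h⟩ < Fin.rev (g ⟨0, h⟩) then (qv⁻¹ - qv) * v g else 0)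
      map_add' := fun u v => by
        funext g
        simp only [Pi.add_apply]
        split_ifs <;> ring
      map_smul' := fun s v => by
        funext g
        simp only [Pi.smul_apply, smul_eq_mul, RingHom.id_apply]
        split_ifs <;> ring }
  else 1

/-- The operator `Ψ(H_{p+1})` on `V̄^⊗m`, interchanging tensor positions `p` and `p+1`
(0-based). -/
def Rsw (r m : ℕ) (p : ℕ) : Module.End Kq (TP r m) :=
  if h : p + 1 < m then
    { toFun := fun v g =>
        if g ⟨p, by omega⟩ = g ⟨p+1, h⟩ then qv⁻¹ * v g
        else v (g ∘ Equiv.swap ⟨p, by omega⟩ ⟨p+1, h⟩) +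
          (if g ⟨p+1, h⟩ < g ⟨p, by omega⟩ then (qv⁻¹ - qv) * v g else 0)
      map_add' := fun u v => by
        funext g
        simp only [Pi.add_apply, Function.comp_apply]
        split_ifs <;> ring
      map_smul' := fun s v => by
        funext g
        simp only [Pi.smul_apply, smul_eq_mul, RingHom.id_apply, Function.comp_apply]
        split_ifs <;> ring }
  else 1

/-- The operator `Ψ(H_i)` on `V̄^⊗m`, for `0 ≤ i ≤ m-1`. -/
def RopN (r m : ℕ) (i : ℕ) : Module.End Kq (TP r m) :=
  if i = 0 then R0op r m else Rsw r m (i - 1)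
/-- `j ∈ 𝕀(2r+2)`, i.e. `η_j ∈ V`. -/
def innerI (r : ℕ) (j : Idx r) : Prop := j ≠ botI r ∧ j ≠ topI r

/-- `f` indexes a basis vector of `V^{⊗l} ⊗ η_{r+3/2}^{⊗(m-l)}`. -/
def goodF (r m : ℕ) (l : ℕ) (f : Fin m → Idx r) : Prop :=
  ∀ k : Fin m, ((k : ℕ) < l → innerI r (f k)) ∧ (l ≤ (k : ℕ) → f k = topI r)

/-- The subspace `V̄_{{1,…,l},∅} = V^{⊗l} ⊗ η_{r+3/2}^{⊗(m-l)}` of `V̄^⊗m`. -/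
def Vsub (r m : ℕ) (l : ℕ) : Submodule Kq (TP r m) :=
  Submodule.span Kq {v | ∃ f, goodF r m l f ∧ v = Mf f}

/-- The subspace `V̄_{I,J}` of `V̄^⊗m`. -/
def VIJ (r m : ℕ) (I J : Finset (Fin m)) : Submodule Kq (TP r m) :=
  Submodule.span Kq {v | ∃ f : Fin m → Idx r,
    (∀ k : Fin m, (k ∈ I → innerI r (f k)) ∧ (k ∈ J → f k = botI r) ∧
      (k ∉ I → k ∉ J → f k = topI r)) ∧ v = Mf f}

/-- The subspace `V̄_l = ⊕_{#I = l, J} V̄_{I,J}` of `V̄^⊗m`. -/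
def Vlevel (r m : ℕ) (l : ℕ) : Submodule Kq (TP r m) :=
  Submodule.span Kq {v | ∃ f : Fin m → Idx r,
    Nat.card {k : Fin m // innerI r (f k)} = l ∧ v = Mf f}

/-- The length (number of inversions) of a permutation of `{0, …, l-1}`. -/
def lenPerm {l : ℕ} (σ : Equiv.Perm (Fin l)) : ℕ :=
  (Finset.univ.filter (fun p : Fin l × Fin l => p.1 < p.2 ∧ σ p.2 < σ p.1)).card

/-- The simple transposition interchanging `p` and `p+1` (0-based) in `𝔖_l`;
this is the paper's `s_{p+1}`. -/
def adjSwap (l : ℕ) (p : ℕ) : Equiv.Perm (Fin l) :=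
  if h : p + 1 < l then Equiv.swap ⟨p, by omega⟩ ⟨p+1, h⟩ else 1

/-- The first descent of a permutation, if any. -/
def descentIdx {l : ℕ} (σ : Equiv.Perm (Fin l)) : Option ℕ :=
  (List.range l).find? (fun p =>
    if h : p + 1 < l then decide (σ ⟨p+1, h⟩ < σ ⟨p, by omega⟩) else false)

/-- Canonical reduced word construction (with fuel). -/
def permWordAux {l : ℕ} : ℕ → Equiv.Perm (Fin l) → List ℕ
  | 0, _ => []
  | (fuel+1), σ =>
    match descentIdx σ with
    | none => []
    | some p => permWordAux fuel (σ * adjSwap l p) ++ [p]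

/-- A canonical reduced word for `σ`: `σ = s_{p₁+1} ⋯ s_{p_k+1}` (paper indexing)
where `permWord σ = [p₁, …, p_k]`, and `k = ℓ(σ)`. -/
def permWord {l : ℕ} (σ : Equiv.Perm (Fin l)) : List ℕ := permWordAux (lenPerm σ) σ

/-- The operator `Ψ(H_σ)` on `V̄^⊗m` for a permutation `σ ∈ 𝔖_l` (`l ≤ m`), where
`H_σ = H_{i₁} ⋯ H_{i_k}` for a reduced expression `σ = s_{i₁} ⋯ s_{i_k}`; since `Ψ` is an
anti-homomorphism this is the product of the `Ψ(H_i)` in reversed order. -/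
def opPerm (r m : ℕ) {l : ℕ} (σ : Equiv.Perm (Fin l)) : Module.End Kq (TP r m) :=
  (((permWord σ).map (fun p => RopN r m (p+1))).reverse).prod

/-- `A` is a finite product of the operators `Ψ(H_i)^{±1}`, `0 ≤ i ≤ m-1`. -/
def IsRWord (r m : ℕ) (A : Module.End Kq (TP r m)) : Prop :=
  ∃ ws : List (Module.End Kq (TP r m)), A = ws.prod ∧
    ∀ u ∈ ws, ∃ i : ℕ, i < m ∧
      (u = RopN r m i ∨ (u * RopN r m i = 1 ∧ RopN r m i * u = 1))
/-- Generator `H_i` of the free algebra on `m` letters. -/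
def Hvar (m : ℕ) (i : Fin m) : FreeAlgebra Kq (Fin m) := FreeAlgebra.ι Kq i

/-- The defining relations of the Iwahori–Hecke algebra `H(B_m)` of type `B_m`. -/
inductive HBrel (m : ℕ) : FreeAlgebra Kq (Fin m) → FreeAlgebra Kq (Fin m) → Prop
  | quad (i : Fin m) :
      HBrel m ((Hvar m i - algebraMap Kq _ qv⁻¹) * (Hvar m i + algebraMap Kq _ qv)) 0
  | braid (i : ℕ) (h1 : 1 ≤ i) (h2 : i + 1 < m) :
      HBrel m (Hvar m ⟨i, by omega⟩ * Hvar m ⟨i+1, h2⟩ * Hvar m ⟨i, by omega⟩)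
              (Hvar m ⟨i+1, h2⟩ * Hvar m ⟨i, by omega⟩ * Hvar m ⟨i+1, h2⟩)
  | comm (i j : Fin m) (h : (i : ℕ) + 1 < (j : ℕ) ∨ (j : ℕ) + 1 < (i : ℕ)) :
      HBrel m (Hvar m i * Hvar m j) (Hvar m j * Hvar m i)
  | braid0 (h : 1 < m) :
      HBrel m (Hvar m ⟨0, by omega⟩ * Hvar m ⟨1, h⟩ * Hvar m ⟨0, by omega⟩ * Hvar m ⟨1, h⟩)
              (Hvar m ⟨1, h⟩ * Hvar m ⟨0, by omega⟩ * Hvar m ⟨1, h⟩ * Hvar m ⟨0, by omega⟩)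

/-- The Iwahori–Hecke algebra `H(B_m)` of type `B_m` over `ℚ(q)`. -/
abbrev HeckeB (m : ℕ) := RingQuot (HBrel m)

/-- The generator `H_i ∈ H(B_m)`. -/
def Hgen (m : ℕ) (i : Fin m) : HeckeB m := RingQuot.mkAlgHom Kq (HBrel m) (Hvar m i)

/-- The generator `H_j ∈ H(B_m)` with out-of-range indices sent to `1`. -/
def HgenN (m : ℕ) (j : ℕ) : HeckeB m := if h : j < m then Hgen m ⟨j, h⟩ else 1

/-- The element `H_w ∈ H(B_m)` for `w ∈ 𝔖_m ⊂ 𝒲(B_m)`, defined via a reduced expression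
for `w` (well defined by Matsumoto's theorem). -/
def HpermB (m : ℕ) (w : Equiv.Perm (Fin m)) : HeckeB m :=
  ((permWord w).map (fun p => HgenN m (p+1))).prod

/-- Generators of the duplex Hecke algebra: the `T_i` and the `x_σ^{(l)}`. -/
def DGen (m : ℕ) : Type := (Fin m) ⊕ (Σ l : Fin (m+1), Equiv.Perm (Fin (l : ℕ)))

/-- The generator `T_i` of the free algebra. -/
def Tvar (m : ℕ) (i : Fin m) : FreeAlgebra Kq (DGen m) := FreeAlgebra.ι Kq (Sum.inl i)

/-- The generator `x_σ^{(l)}` of the free algebra. -/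
def Xvar (m : ℕ) (l : Fin (m+1)) (σ : Equiv.Perm (Fin (l : ℕ))) : FreeAlgebra Kq (DGen m) :=
  FreeAlgebra.ι Kq (Sum.inr ⟨l, σ⟩)

/-- The defining relations of the duplex Hecke algebra `𝓗_m` of type `B`. -/
inductive DHrel (m : ℕ) : FreeAlgebra Kq (DGen m) → FreeAlgebra Kq (DGen m) → Prop
  | quadT (i : Fin m) :
      DHrel m ((Tvar m i + algebraMap Kq _ qv) * (Tvar m i - algebraMap Kq _ qv⁻¹)) 0
  | braidT (i : ℕ) (h1 : 1 ≤ i) (h2 : i + 1 < m) :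
      DHrel m (Tvar m ⟨i, by omega⟩ * Tvar m ⟨i+1, h2⟩ * Tvar m ⟨i, by omega⟩)
              (Tvar m ⟨i+1, h2⟩ * Tvar m ⟨i, by omega⟩ * Tvar m ⟨i+1, h2⟩)
  | commT (i j : Fin m) (h : (i : ℕ) + 1 < (j : ℕ) ∨ (j : ℕ) + 1 < (i : ℕ)) :
      DHrel m (Tvar m i * Tvar m j) (Tvar m j * Tvar m i)
  | braid0T (h : 1 < m) :
      DHrel m (Tvar m ⟨0, by omega⟩ * Tvar m ⟨1, h⟩ * Tvar m ⟨0, by omega⟩ * Tvar m ⟨1, h⟩)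
              (Tvar m ⟨1, h⟩ * Tvar m ⟨0, by omega⟩ * Tvar m ⟨1, h⟩ * Tvar m ⟨0, by omega⟩)
  | xRightUp (l : Fin (m+1)) (σ : Equiv.Perm (Fin (l : ℕ))) (p : ℕ) (hp : p + 1 < (l : ℕ))
      (hlen : lenPerm (σ * adjSwap (l : ℕ) p) = lenPerm σ + 1) :
      DHrel m (Xvar m l σ * Xvar m l (adjSwap (l : ℕ) p)) (Xvar m l (σ * adjSwap (l : ℕ) p))
  | xRightDown (l : Fin (m+1)) (σ : Equiv.Perm (Fin (l : ℕ))) (p : ℕ) (hp : p + 1 < (l : ℕ))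
      (hlen : lenPerm (σ * adjSwap (l : ℕ) p) + 1 = lenPerm σ) :
      DHrel m (Xvar m l σ * Xvar m l (adjSwap (l : ℕ) p))
              (Xvar m l (σ * adjSwap (l : ℕ) p) + algebraMap Kq _ (qv⁻¹ - qv) * Xvar m l σ)
  | xLeftUp (l : Fin (m+1)) (σ : Equiv.Perm (Fin (l : ℕ))) (p : ℕ) (hp : p + 1 < (l : ℕ))
      (hlen : lenPerm (adjSwap (l : ℕ) p * σ) = lenPerm σ + 1) :
      DHrel m (Xvar m l (adjSwap (l : ℕ) p) * Xvar m l σ) (Xvar m l (adjSwap (l : ℕ) p * σ))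
  | xLeftDown (l : Fin (m+1)) (σ : Equiv.Perm (Fin (l : ℕ))) (p : ℕ) (hp : p + 1 < (l : ℕ))
      (hlen : lenPerm (adjSwap (l : ℕ) p * σ) + 1 = lenPerm σ) :
      DHrel m (Xvar m l (adjSwap (l : ℕ) p) * Xvar m l σ)
              (Xvar m l (adjSwap (l : ℕ) p * σ) + algebraMap Kq _ (qv⁻¹ - qv) * Xvar m l σ)
  | xOrtho (l k : Fin (m+1)) (h : l ≠ k) (σ : Equiv.Perm (Fin (l : ℕ)))
      (γ : Equiv.Perm (Fin (k : ℕ))) :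
      DHrel m (Xvar m l σ * Xvar m k γ) 0
  | TxMid (i : ℕ) (l : Fin (m+1)) (h0 : 0 < i) (hil : i < (l : ℕ))
      (σ : Equiv.Perm (Fin (l : ℕ))) :
      DHrel m (Tvar m ⟨i, by have := l.2; omega⟩ * Xvar m l σ)
              (Xvar m l (adjSwap (l : ℕ) (i-1)) * Xvar m l σ)
  | xTMid (i : ℕ) (l : Fin (m+1)) (h0 : 0 < i) (hil : i < (l : ℕ))
      (σ : Equiv.Perm (Fin (l : ℕ))) :
      DHrel m (Xvar m l σ * Tvar m ⟨i, by have := l.2; omega⟩)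
              (Xvar m l σ * Xvar m l (adjSwap (l : ℕ) (i-1)))
  | TxBig (i : Fin m) (l : Fin (m+1)) (h : (l : ℕ) < (i : ℕ)) (σ : Equiv.Perm (Fin (l : ℕ))) :
      DHrel m (Tvar m i * Xvar m l σ) (algebraMap Kq _ qv⁻¹ * Xvar m l σ)
  | xTBig (i : Fin m) (l : Fin (m+1)) (h : (l : ℕ) < (i : ℕ)) (σ : Equiv.Perm (Fin (l : ℕ))) :
      DHrel m (Xvar m l σ * Tvar m i) (algebraMap Kq _ qv⁻¹ * Xvar m l σ)

/-- The duplex Hecke algebra `𝓗_m` of type `B` over `ℚ(q)`. -/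
abbrev DuplexH (m : ℕ) := RingQuot (DHrel m)

/-- The generator `T_i ∈ 𝓗_m`. -/
def Tg (m : ℕ) (i : Fin m) : DuplexH m := RingQuot.mkAlgHom Kq (DHrel m) (Tvar m i)

/-- The generator `x_σ^{(l)} ∈ 𝓗_m`. -/
def Xg (m : ℕ) (l : Fin (m+1)) (σ : Equiv.Perm (Fin (l : ℕ))) : DuplexH m :=
  RingQuot.mkAlgHom Kq (DHrel m) (Xvar m l σ)

/-! ### Types of indices and words -/

lemma innerI_iff {r : ℕ} (j : Idx r) : innerI r j ↔ 0 < (j : ℕ) ∧ (j : ℕ) < 2 * r + 3 := by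
  have := j.2
  simp only [innerI, botI, topI, ne_eq, Fin.ext_iff]
  omega

lemma innerI_rev {r : ℕ} (j : Idx r) : innerI r (Fin.rev j) ↔ innerI r j := by
  have := j.2
  simp only [innerI_iff, Fin.val_rev]
  omega

/-- The order relation between two indices, not both inner, depends only on their types
(bottom, inner or top). -/
lemma type_compare {r : ℕ} {x y x' y' : Idx r} (hx : innerI r x' ↔ innerI r x)
    (hx' : ¬ innerI r x → x' = x) (hy : innerI r y' ↔ innerI r y)
    (hy' : ¬ innerI r y → y' = y) (h : ¬ (innerI r x ∧ innerI r y)) :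
    (x' = y' ↔ x = y) ∧ (y' < x' ↔ y < x) := by
  have := x.2
  have := y.2
  have := x'.2
  have := y'.2
  simp only [innerI_iff, Fin.ext_iff, Fin.lt_def] at *
  omega

open Classical in
/-- The number of inner letters of the word `f`. -/
def nInner {r m : ℕ} (f : Fin m → Idx r) : ℕ :=
  (Finset.univ.filter (fun k => innerI r (f k))).card

open Classical in
/-- The number of inner letters of the word `f` strictly to the left of position `k`. -/
def rk {r m : ℕ} (f : Fin m → Idx r) (k : Fin m) : ℕ :=
  (Finset.univ.filter (fun i => innerI r (f i) ∧ i < k)).card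

lemma rk_lt {r m : ℕ} (f : Fin m → Idx r) (k : Fin m) : rk f k < m := by
  classical
  have : rk f k < (Finset.univ : Finset (Fin m)).card := by
    apply Finset.card_lt_card
    refine ⟨Finset.subset_univ _, fun h => ?_⟩
    have := h (Finset.mem_univ k)
    simp at this
  simpa using this

lemma rk_lt_nInner {r m : ℕ} {f : Fin m → Idx r} {k : Fin m} (hk : innerI r (f k)) :
    rk f k < nInner f := by
  classical
  apply Finset.card_lt_card
  refine ⟨fun i hi => ?_, fun h => ?_⟩
  · simp only [Finset.mem_filter] at hi ⊢
    exact ⟨hi.1, hi.2.1⟩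
  · have := h (Finset.mem_filter.2 ⟨Finset.mem_univ k, hk⟩)
    simp at this

lemma rk_strict {r m : ℕ} {f : Fin m → Idx r} {i k : Fin m} (hi : innerI r (f i)) (hik : i < k) :
    rk f i < rk f k := by
  classical
  apply Finset.card_lt_card
  refine ⟨fun j hj => ?_, fun h => ?_⟩
  · simp only [Finset.mem_filter] at hj ⊢
    exact ⟨hj.1, hj.2.1, hj.2.2.trans hik⟩
  · have := h (Finset.mem_filter.2 ⟨Finset.mem_univ i, hi, hik⟩)
    simp at this

lemma rk_inj {r m : ℕ} {f : Fin m → Idx r} {i k : Fin m} (hi : innerI r (f i))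
    (hk : innerI r (f k)) (h : rk f i = rk f k) : i = k := by
  rcases lt_trichotomy i k with h1 | h1 | h1
  · have := rk_strict hi h1
    omega
  · exact h1
  · have := rk_strict hk h1
    omega

lemma rk_succ {r m : ℕ} {f : Fin m → Idx r} {P Q : Fin m} (hPQ : (Q : ℕ) = P + 1)
    (hP : innerI r (f P)) : rk f Q = rk f P + 1 := by
  classical
  have : Finset.univ.filter (fun i => innerI r (f i) ∧ i < Q) =
      insert P (Finset.univ.filter (fun i => innerI r (f i) ∧ i < P)) := by
    ext i
    simp only [Finset.mem_filter, Finset.mem_univ, true_and, Finset.mem_insert]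
    constructor
    · rintro ⟨h1, h2⟩
      by_cases h : i = P
      · exact Or.inl h
      · refine Or.inr ⟨h1, ?_⟩
        simp only [Fin.lt_def, Fin.ext_iff] at *
        omega
    · rintro (h | ⟨h1, h2⟩)
      · subst h
        refine ⟨hP, ?_⟩
        simp only [Fin.lt_def]
        omega
      · refine ⟨h1, ?_⟩
        simp only [Fin.lt_def] at *
        omega
  rw [rk, this, Finset.card_insert_of_notMem (by simp), rk]

lemma rk_congr {r m : ℕ} {f f' : Fin m → Idx r} (h : ∀ k, innerI r (f' k) ↔ innerI r (f k))
    (k : Fin m) : rk f' k = rk f k := by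
  classical
  unfold rk
  simp only [h]

lemma nInner_congr {r m : ℕ} {f f' : Fin m → Idx r}
    (h : ∀ k, innerI r (f' k) ↔ innerI r (f k)) : nInner f' = nInner f := by
  classical
  unfold nInner
  simp only [h]

lemma nInner_comp {r m : ℕ} (f : Fin m → Idx r) (σ : Equiv.Perm (Fin m)) :
    nInner (f ∘ σ) = nInner f := by
  classical
  exact Finset.card_equiv σ (by simp)

lemma innerI_update_rev {r m : ℕ} (f : Fin m → Idx r) (z k : Fin m) :
    innerI r (Function.update f z (Fin.rev (f z)) k) ↔ innerI r (f k) := by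
  by_cases h : k = z
  · subst h
    simp [innerI_rev]
  · simp [Function.update_of_ne h]

/-- An adjacent transposition whose two positions do not both carry inner letters
preserves the relative order of the inner letters. -/
lemma rk_swap {r m : ℕ} {f : Fin m → Idx r} {P Q : Fin m} (hPQ : (Q : ℕ) = P + 1)
    (hn : ¬ (innerI r (f P) ∧ innerI r (f Q))) {k : Fin m}
    (hk : innerI r (f (Equiv.swap P Q k))) :
    rk (f ∘ Equiv.swap P Q) k = rk f (Equiv.swap P Q k) := by
  classical
  unfold rk
  refine Finset.card_equiv (Equiv.swap P Q) (fun i => ?_)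
  simp only [Finset.mem_filter, Finset.mem_univ, true_and, Function.comp_apply]
  refine and_congr_right fun hi => ?_
  -- A transposition of neighbours reverses only the pair of positions `P`, `Q`.
  have hcase : ∀ x : Fin m, (Equiv.swap P Q x = x ∧ x ≠ P ∧ x ≠ Q) ∨
      (x = P ∧ Equiv.swap P Q x = Q) ∨ (x = Q ∧ Equiv.swap P Q x = P) := by
    intro x
    by_cases h1 : x = P
    · subst h1
      simp
    by_cases h2 : x = Q
    · subst h2
      simp
    exact Or.inl ⟨Equiv.swap_apply_of_ne_of_ne h1 h2, h1, h2⟩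
  by_cases hik : i = k
  · subst hik
    simp
  rcases hcase i with ⟨hi1, hi2⟩ | ⟨hi2, hi1⟩ | ⟨hi2, hi1⟩ <;>
    rcases hcase k with ⟨hk1, hk2⟩ | ⟨hk2, hk1⟩ | ⟨hk2, hk1⟩ <;>
    rw [hi1] at hi ⊢ <;> rw [hk1] at hk ⊢ <;>
    first
    | (simp only [Fin.lt_def, Fin.ext_iff, ne_eq] at *; omega)
    | exact (hn (And.intro hi hk)).elim
    | exact (hn (And.intro hk hi)).elim

/-! ### Slices -/

open Classical in
/-- The word of the same type as `f` whose inner letters, read from left to right, are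
`g 0, g 1, …`. -/
def asm {r m : ℕ} (f g : Fin m → Idx r) : Fin m → Idx r :=
  fun k => if innerI r (f k) then g ⟨rk f k, rk_lt f k⟩ else f k

lemma asm_pos {r m : ℕ} {f : Fin m → Idx r} (g : Fin m → Idx r) {k : Fin m}
    (h : innerI r (f k)) : asm f g k = g ⟨rk f k, rk_lt f k⟩ := if_pos h

lemma asm_neg {r m : ℕ} {f : Fin m → Idx r} (g : Fin m → Idx r) {k : Fin m}
    (h : ¬ innerI r (f k)) : asm f g k = f k := if_neg h

lemma asm_inner {r m l : ℕ} {f g : Fin m → Idx r} (hf : nInner f = l) (hg : goodF r m l g)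
    (k : Fin m) : innerI r (asm f g k) ↔ innerI r (f k) := by
  by_cases h : innerI r (f k)
  · rw [asm_pos g h]
    have := rk_lt_nInner h
    exact ⟨fun _ => h, fun _ => (hg _).1 (by simpa using hf ▸ this)⟩
  · rw [asm_neg g h]

lemma asm_congr {r m : ℕ} {f f' : Fin m → Idx r} (h : ∀ k, innerI r (f' k) ↔ innerI r (f k))
    (h' : ∀ k, ¬ innerI r (f k) → f' k = f k) (g : Fin m → Idx r) : asm f' g = asm f g := by
  funext k
  by_cases hk : innerI r (f k)
  · rw [asm_pos g hk, asm_pos g ((h k).2 hk)]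
    simp only [rk_congr h]
  · rw [asm_neg g hk, asm_neg g (fun h1 => hk ((h k).1 h1)), h' k hk]

lemma asm_swap {r m : ℕ} {f : Fin m → Idx r} {P Q : Fin m} (hPQ : (Q : ℕ) = P + 1)
    (hn : ¬ (innerI r (f P) ∧ innerI r (f Q))) (g : Fin m → Idx r) :
    asm f g ∘ Equiv.swap P Q = asm (f ∘ Equiv.swap P Q) g := by
  funext k
  by_cases hk : innerI r (f (Equiv.swap P Q k))
  · rw [Function.comp_apply, asm_pos g hk, asm_pos (f := f ∘ Equiv.swap P Q) g hk]
    simp only [rk_swap hPQ hn hk]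
  · rw [Function.comp_apply, asm_neg g hk, asm_neg (f := f ∘ Equiv.swap P Q) g hk]
    rfl

lemma asm_swap_inner {r m : ℕ} {f : Fin m → Idx r} {P Q A B : Fin m} (hPQ : (Q : ℕ) = P + 1)
    (hP : innerI r (f P)) (hQ : innerI r (f Q)) (hA : (A : ℕ) = rk f P)
    (hB : (B : ℕ) = rk f Q) (g : Fin m → Idx r) :
    asm f (g ∘ Equiv.swap A B) = asm f g ∘ Equiv.swap P Q := by
  obtain rfl : A = ⟨rk f P, rk_lt f P⟩ := Fin.ext hA
  obtain rfl : B = ⟨rk f Q, rk_lt f Q⟩ := Fin.ext hB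
  funext k
  rw [Function.comp_apply]
  by_cases h1 : k = P
  · subst h1
    rw [Equiv.swap_apply_left, asm_pos _ hP, asm_pos _ hQ, Function.comp_apply,
      Equiv.swap_apply_left]
  by_cases h2 : k = Q
  · subst h2
    rw [Equiv.swap_apply_right, asm_pos _ hP, asm_pos _ hQ, Function.comp_apply,
      Equiv.swap_apply_right]
  rw [Equiv.swap_apply_of_ne_of_ne h1 h2]
  by_cases hk : innerI r (f k)
  · rw [asm_pos _ hk, asm_pos _ hk, Function.comp_apply, Equiv.swap_apply_of_ne_of_ne]
    · exact fun h => h1 (rk_inj hk hP (Fin.ext_iff.1 h))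
    · exact fun h => h2 (rk_inj hk hQ (Fin.ext_iff.1 h))
  · rw [asm_neg _ hk, asm_neg _ hk]

lemma rk_zero {r m : ℕ} (f : Fin m → Idx r) (z : Fin m) (hz : (z : ℕ) = 0) : rk f z = 0 := by
  classical
  rw [rk, Finset.card_eq_zero, Finset.filter_eq_empty_iff]
  rintro i - ⟨-, h⟩
  simp only [Fin.lt_def] at h
  omega

lemma asm_flip {r m : ℕ} {f : Fin m → Idx r} {z : Fin m} (hn : ¬ innerI r (f z))
    (g : Fin m → Idx r) :
    Function.update (asm f g) z (Fin.rev (asm f g z)) =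
      asm (Function.update f z (Fin.rev (f z))) g := by
  funext k
  have hi := innerI_update_rev f z
  by_cases hk : k = z
  · subst hk
    rw [asm_neg _ (fun h => hn ((hi _).1 h)), asm_neg _ hn]
    simp
  rw [Function.update_of_ne hk]
  by_cases h : innerI r (f k)
  · rw [asm_pos _ h, asm_pos _ ((hi k).2 h)]
    simp only [rk_congr hi]
  · rw [asm_neg _ h, asm_neg _ (fun h' => h ((hi k).1 h')), Function.update_of_ne hk]

lemma asm_flip_inner {r m : ℕ} {f : Fin m → Idx r} {z : Fin m} (hz : (z : ℕ) = 0)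
    (hn : innerI r (f z)) (g : Fin m → Idx r) :
    Function.update (asm f g) z (Fin.rev (asm f g z)) =
      asm f (Function.update g z (Fin.rev (g z))) := by
  have hz' : (⟨rk f z, rk_lt f z⟩ : Fin m) = z := Fin.ext (by rw [hz]; exact rk_zero f z hz)
  funext k
  by_cases hk : k = z
  · subst hk
    rw [asm_pos _ hn, asm_pos _ hn, hz']
    simp
  rw [Function.update_of_ne hk]
  by_cases h : innerI r (f k)
  · rw [asm_pos _ h, asm_pos _ h, Function.update_of_ne]
    intro h'
    exact hk (rk_inj h hn (Fin.ext_iff.1 (h'.trans hz'.symm)))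
  · rw [asm_neg _ h, asm_neg _ h]

open Classical in
/-- The slice of `v` along the type of the word `f`: the coordinates of `v` at the words of the
same type as `f`, read as a vector of `V^{⊗l} ⊗ η_{r+3/2}^{⊗(m-l)}` by keeping the inner letters
in their order. -/
def slc {r m : ℕ} (l : ℕ) (f : Fin m → Idx r) : TP r m →ₗ[Kq] TP r m where
  toFun v := fun g => if goodF r m l g then v (asm f g) else 0
  map_add' u v := by
    funext g
    simp only [Pi.add_apply]
    split_ifs <;> simp
  map_smul' s v := by
    funext g
    simp only [Pi.smul_apply, RingHom.id_apply]
    split_ifs <;> simp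

lemma slc_pos {r m l : ℕ} (f : Fin m → Idx r) (v : TP r m) {g : Fin m → Idx r}
    (hg : goodF r m l g) : slc l f v g = v (asm f g) := if_pos hg

lemma slc_neg {r m l : ℕ} (f : Fin m → Idx r) (v : TP r m) {g : Fin m → Idx r}
    (hg : ¬ goodF r m l g) : slc l f v g = 0 := if_neg hg

lemma slc_congr {r m : ℕ} (l : ℕ) {f f' : Fin m → Idx r}
    (h : ∀ k, innerI r (f' k) ↔ innerI r (f k))
    (h' : ∀ k, ¬ innerI r (f k) → f' k = f k) (v : TP r m) : slc l f' v = slc l f v := by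
  funext g
  by_cases hg : goodF r m l g
  · rw [slc_pos _ _ hg, slc_pos _ _ hg, asm_congr h h']
  · rw [slc_neg _ _ hg, slc_neg _ _ hg]

/-! ### The operators on slices -/

lemma Rsw_apply {r m p : ℕ} (h : p + 1 < m) (v : TP r m) (g : Fin m → Idx r) :
    Rsw r m p v g = if g ⟨p, by omega⟩ = g ⟨p+1, h⟩ then qv⁻¹ * v g
        else v (g ∘ Equiv.swap ⟨p, by omega⟩ ⟨p+1, h⟩) +
          (if g ⟨p+1, h⟩ < g ⟨p, by omega⟩ then (qv⁻¹ - qv) * v g else 0) := by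
  simp only [Rsw, dif_pos h]
  rfl

lemma R0op_apply {r m : ℕ} (h : 0 < m) (v : TP r m) (g : Fin m → Idx r) :
    R0op r m v g = v (Function.update g ⟨0, h⟩ (Fin.rev (g ⟨0, h⟩))) +
          (if g ⟨0, h⟩ < Fin.rev (g ⟨0, h⟩) then (qv⁻¹ - qv) * v g else 0) := by
  simp only [R0op, dif_pos h]
  rfl

/-- If the positions `p`, `p+1` do not both carry inner letters, the Hecke generator permutes
the slices up to a multiple of the slice itself. -/
lemma slc_Rsw {r m l p : ℕ} (h : p + 1 < m) {f : Fin m → Idx r} (hf : nInner f = l)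
    (hn : ¬ (innerI r (f ⟨p, by omega⟩) ∧ innerI r (f ⟨p+1, h⟩))) (v : TP r m) :
    slc l f (Rsw r m p v) = if f ⟨p, by omega⟩ = f ⟨p+1, h⟩ then qv⁻¹ • slc l f v
      else slc l (f ∘ Equiv.swap ⟨p, by omega⟩ ⟨p+1, h⟩) v +
        (if f ⟨p+1, h⟩ < f ⟨p, by omega⟩ then (qv⁻¹ - qv) • slc l f v else 0) := by
  funext g
  by_cases hg : goodF r m l g
  · rw [slc_pos _ _ hg, Rsw_apply h]
    have hc := type_compare (asm_inner hf hg ⟨p, by omega⟩) (asm_neg g)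
      (asm_inner hf hg ⟨p+1, h⟩) (asm_neg g) hn
    simp only [hc.1, hc.2, asm_swap (P := ⟨p, by omega⟩) (Q := ⟨p+1, h⟩) rfl hn]
    split_ifs <;> simp [slc_pos _ _ hg]
  · rw [slc_neg _ _ hg]
    split_ifs <;> simp [slc_neg _ _ hg]

lemma goodF_swap {r m l a : ℕ} (h : a + 1 < m) (ha : a + 1 < l) (g : Fin m → Idx r) :
    goodF r m l (g ∘ Equiv.swap ⟨a, by omega⟩ ⟨a+1, h⟩) ↔ goodF r m l g := by
  have key : ∀ g : Fin m → Idx r, goodF r m l g →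
      goodF r m l (g ∘ Equiv.swap ⟨a, by omega⟩ ⟨a+1, h⟩) := by
    intro g hg k
    by_cases h1 : k = ⟨a, by omega⟩
    · subst h1
      simp only [Function.comp_apply, Equiv.swap_apply_left]
      exact ⟨fun _ => (hg _).1 ha, fun h3 => absurd h3 (by simp; omega)⟩
    by_cases h2 : k = ⟨a+1, h⟩
    · subst h2
      simp only [Function.comp_apply, Equiv.swap_apply_right]
      exact ⟨fun _ => (hg _).1 (by simp; omega), fun h3 => absurd h3 (by simp; omega)⟩
    rw [Function.comp_apply, Equiv.swap_apply_of_ne_of_ne h1 h2]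
    exact hg k
  refine ⟨fun hg => ?_, key g⟩
  have := key _ hg
  rwa [Function.comp_assoc, ← Equiv.coe_trans, Equiv.swap_swap, Equiv.coe_refl,
    Function.comp_id] at this

/-- If the positions `p`, `p+1` both carry inner letters, the Hecke generator acts on the slice
by a generator of the smaller Hecke algebra. -/
lemma slc_Rsw_inner {r m l p : ℕ} (h : p + 1 < m) {f : Fin m → Idx r} (hf : nInner f = l)
    (hP : innerI r (f ⟨p, by omega⟩)) (hQ : innerI r (f ⟨p+1, h⟩)) :
    ∃ a, a + 1 < l ∧ ∀ v : TP r m, slc l f (Rsw r m p v) = Rsw r m a (slc l f v) := by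
  have hs : rk f ⟨p+1, h⟩ = rk f ⟨p, by omega⟩ + 1 := rk_succ rfl hP
  have hl := rk_lt_nInner hQ
  have hm := rk_lt f ⟨p+1, h⟩
  have hm' := rk_lt f ⟨p, by omega⟩
  refine ⟨rk f ⟨p, by omega⟩, by omega, fun v => ?_⟩
  funext g
  have ha : rk f ⟨p, by omega⟩ + 1 < m := by omega
  have hgs := goodF_swap (l := l) ha (by omega) g
  rw [Rsw_apply ha]
  by_cases hg : goodF r m l g
  · have hsw := asm_swap_inner (P := ⟨p, by omega⟩) (Q := ⟨p+1, h⟩) (A := ⟨_, hm'⟩) (B := ⟨_, ha⟩)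
      rfl hP hQ rfl hs.symm g
    rw [slc_pos _ _ hg, slc_pos _ _ hg, Rsw_apply h, slc_pos _ _ (hgs.2 hg), asm_pos _ hP,
      asm_pos _ hQ, hsw]
    simp only [hs]
  · rw [slc_neg _ _ hg, slc_neg _ _ hg, slc_neg _ _ (fun h => hg (hgs.1 h))]
    simp

lemma slc_R0 {r m l : ℕ} (h : 0 < m) {f : Fin m → Idx r}
    (hn : ¬ innerI r (f ⟨0, h⟩)) (v : TP r m) :
    slc l f (R0op r m v) = slc l (Function.update f ⟨0, h⟩ (Fin.rev (f ⟨0, h⟩))) v +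
      (if f ⟨0, h⟩ < Fin.rev (f ⟨0, h⟩) then (qv⁻¹ - qv) • slc l f v else 0) := by
  funext g
  by_cases hg : goodF r m l g
  · rw [slc_pos _ _ hg, R0op_apply h, asm_flip hn, asm_neg g hn]
    split_ifs <;> simp [slc_pos _ _ hg]
  · rw [slc_neg _ _ hg]
    split_ifs <;> simp [slc_neg _ _ hg]

lemma goodF_flip {r m l : ℕ} (h : 0 < m) (hl : 0 < l) (g : Fin m → Idx r) :
    goodF r m l (Function.update g ⟨0, h⟩ (Fin.rev (g ⟨0, h⟩))) ↔ goodF r m l g := by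
  refine forall_congr' fun k => ?_
  rw [innerI_update_rev]
  refine and_congr_right fun _ => imp_congr_right fun hk => ?_
  rw [Function.update_of_ne]
  rintro rfl
  simp at hk
  omega

lemma slc_R0_inner {r m l : ℕ} (h : 0 < m) {f : Fin m → Idx r} (hf : nInner f = l)
    (hn : innerI r (f ⟨0, h⟩)) (v : TP r m) :
    slc l f (R0op r m v) = R0op r m (slc l f v) := by
  have hl : 0 < l := by
    have := rk_lt_nInner hn
    omega
  funext g
  have hgs := goodF_flip (l := l) h hl g
  rw [R0op_apply h]
  by_cases hg : goodF r m l g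
  · have h0 : asm f g ⟨0, h⟩ = g ⟨0, h⟩ := by
      rw [asm_pos g hn]
      congr 1
      exact Fin.ext (rk_zero f _ rfl)
    rw [slc_pos _ _ hg, slc_pos _ _ hg, slc_pos _ _ (hgs.2 hg), R0op_apply h,
      asm_flip_inner rfl hn, h0]
  · rw [slc_neg _ _ hg, slc_neg _ _ hg, slc_neg _ _ (fun h => hg (hgs.1 h))]
    simp

/-! ### Supports, and words of the base type -/

lemma mem_span_Mf {r m : ℕ} (P : (Fin m → Idx r) → Prop) (v : TP r m) :
    v ∈ Submodule.span Kq {v : TP r m | ∃ f, P f ∧ v = Mf f} ↔ ∀ f, ¬ P f → v f = 0 := by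
  classical
  constructor
  · intro hv f hf
    induction hv using Submodule.span_induction with
    | mem x hx =>
      obtain ⟨f', hf', rfl⟩ := hx
      rw [Mf, Pi.single_apply, if_neg]
      rintro rfl
      exact hf hf'
    | zero => rfl
    | add x y _ _ hx hy => simp [hx, hy]
    | smul a x _ hx => simp [hx]
  · intro h
    rw [pi_eq_sum_univ' v]
    refine Submodule.sum_mem _ fun f _ => ?_
    by_cases hf : P f
    · refine Submodule.smul_mem _ _ (Submodule.subset_span ⟨f, hf, ?_⟩)
      funext g
      simp [Mf, Pi.single_apply, eq_comm]
    · rw [h f hf, zero_smul]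
      exact Submodule.zero_mem _

lemma mem_Vsub {r m l : ℕ} (v : TP r m) :
    v ∈ Vsub r m l ↔ ∀ f, ¬ goodF r m l f → v f = 0 := mem_span_Mf _ v

lemma good_inner {r m l : ℕ} {f : Fin m → Idx r} (hf : goodF r m l f) (k : Fin m) :
    innerI r (f k) ↔ (k : ℕ) < l := by
  refine ⟨fun h => ?_, (hf k).1⟩
  by_contra hk
  exact h.2 ((hf k).2 (by omega))

lemma nInner_good {r m l : ℕ} (hl : l ≤ m) {f : Fin m → Idx r} (hf : goodF r m l f) :
    nInner f = l := by
  classical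
  unfold nInner
  simp only [good_inner hf]
  rw [Fin.card_filter_val_lt]
  omega

lemma asm_good {r m l : ℕ} {f g : Fin m → Idx r} (hf : goodF r m l f)
    (hg : goodF r m l g) : asm f g = g := by
  classical
  funext k
  by_cases hk : innerI r (f k)
  · rw [asm_pos g hk]
    congr 1
    refine Fin.ext ?_
    have hkl := (good_inner hf k).1 hk
    have : Finset.univ.filter (fun i => innerI r (f i) ∧ i < k) = Finset.Iio k := by
      ext i
      simp only [good_inner hf, Finset.mem_filter, Finset.mem_univ, true_and, Finset.mem_Iio,
        Fin.lt_def]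
      omega
    change rk f k = k
    rw [rk, this, Fin.card_Iio]
  · rw [asm_neg g hk]
    rw [good_inner hf] at hk
    rw [(hf k).2 (by omega), (hg k).2 (by omega)]

lemma slc_good {r m l : ℕ} {f : Fin m → Idx r} (hf : goodF r m l f) {v : TP r m}
    (hv : v ∈ Vsub r m l) : slc l f v = v := by
  funext g
  by_cases hg : goodF r m l g
  · rw [slc_pos _ _ hg, asm_good hf hg]
  · rw [slc_neg _ _ hg, (mem_Vsub v).1 hv g hg]

lemma slc_mem_Vsub {r m l : ℕ} (f : Fin m → Idx r) (v : TP r m) : slc l f v ∈ Vsub r m l :=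
  (mem_Vsub _).2 fun _ hg => slc_neg _ _ hg

/-- The word `η_{-r-1/2}^{⊗l} ⊗ η_{r+3/2}^{⊗(m-l)}`, a representative of the base type. -/
def baseW (r m l : ℕ) : Fin m → Idx r :=
  fun k => if (k : ℕ) < l then ⟨1, by omega⟩ else topI r

lemma innerI_one {r : ℕ} (hr : 1 ≤ r) : innerI r ⟨1, by omega⟩ := by
  rw [innerI_iff]
  simp only
  omega

lemma not_innerI_top {r : ℕ} : ¬ innerI r (topI r) := fun h => h.2 rfl

lemma not_innerI_bot {r : ℕ} : ¬ innerI r (botI r) := fun h => h.1 rfl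

lemma baseW_good {r m l : ℕ} (hr : 1 ≤ r) : goodF r m l (baseW r m l) := by
  intro k
  unfold baseW
  refine ⟨fun h => ?_, fun h => ?_⟩
  · rw [if_pos h]
    exact innerI_one hr
  · rw [if_neg (by omega)]

/-- Every word with `l` inner letters is reassembled from its own inner letters. -/
lemma exists_asm {r m l : ℕ} (hr : 1 ≤ r) {f : Fin m → Idx r} (hf : nInner f = l) :
    ∃ g, goodF r m l g ∧ asm f g = f := by
  classical
  refine ⟨fun j => if h : ∃ k, innerI r (f k) ∧ rk f k = j then f h.choose else baseW r m l j,
    ?_, ?_⟩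
  · intro j
    by_cases h : ∃ k, innerI r (f k) ∧ rk f k = j
    · simp only [dif_pos h]
      have h2 := h.choose_spec
      have := rk_lt_nInner h2.1
      exact ⟨fun _ => h2.1, fun h3 => by omega⟩
    · simp only [dif_neg h]
      exact baseW_good hr j
  · funext k
    by_cases hk : innerI r (f k)
    · rw [asm_pos _ hk]
      have h : ∃ k', innerI r (f k') ∧ rk f k' = rk f k := ⟨k, hk, rfl⟩
      simp only [dif_pos h]
      rw [rk_inj h.choose_spec.1 hk h.choose_spec.2]
    · rw [asm_neg _ hk]

/-! ### The subspace of vectors all of whose slices lie in `S` -/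

/-- The vectors of `V̄_l` all of whose slices lie in `S`. -/
def glue {r m : ℕ} (l : ℕ) (S : Submodule Kq (TP r m)) : Submodule Kq (TP r m) where
  carrier := {v | ∀ f, (nInner f = l → slc l f v ∈ S) ∧ (nInner f ≠ l → v f = 0)}
  zero_mem' := fun f => ⟨fun _ => by simp, fun _ => rfl⟩
  add_mem' := by
    intro u v hu hv f
    refine ⟨fun h => ?_, fun h => ?_⟩
    · rw [map_add]
      exact S.add_mem ((hu f).1 h) ((hv f).1 h)
    · rw [Pi.add_apply, (hu f).2 h, (hv f).2 h, add_zero]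
  smul_mem' := by
    intro a v hv f
    refine ⟨fun h => ?_, fun h => ?_⟩
    · rw [map_smul]
      exact S.smul_mem _ ((hv f).1 h)
    · rw [Pi.smul_apply, (hv f).2 h, smul_zero]

lemma RopN_zero (r m : ℕ) : RopN r m 0 = R0op r m := rfl

lemma RopN_succ (r m p : ℕ) : RopN r m (p + 1) = Rsw r m p := rfl

lemma glue_RopN {r m l : ℕ} {S : Submodule Kq (TP r m)}
    (hSstab : ∀ i : ℕ, i < l → ∀ v ∈ S, RopN r m i v ∈ S) (i : ℕ) (hi : i < m) (v : TP r m)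
    (hv : v ∈ glue l S) : RopN r m i v ∈ glue l S := by
  intro f
  cases i with
  | zero =>
    rw [RopN_zero]
    have hu : nInner (Function.update f ⟨0, hi⟩ (Fin.rev (f ⟨0, hi⟩))) = nInner f :=
      nInner_congr (innerI_update_rev f _)
    refine ⟨fun hf => ?_, fun hf => ?_⟩
    · by_cases hn : innerI r (f ⟨0, hi⟩)
      · rw [slc_R0_inner hi hf hn]
        have := rk_lt_nInner hn
        exact hSstab 0 (by omega) _ ((hv f).1 hf)
      · rw [slc_R0 hi hn]
        refine S.add_mem ((hv _).1 (hu.trans hf)) ?_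
        split_ifs
        · exact S.smul_mem _ ((hv f).1 hf)
        · exact S.zero_mem
    · rw [R0op_apply hi, (hv f).2 hf, (hv _).2 (fun h => hf (hu.symm.trans h))]
      simp
  | succ p =>
    rw [RopN_succ]
    refine ⟨fun hf => ?_, fun hf => ?_⟩
    · by_cases hn : innerI r (f ⟨p, by omega⟩) ∧ innerI r (f ⟨p+1, hi⟩)
      · obtain ⟨a, ha, h⟩ := slc_Rsw_inner hi hf hn.1 hn.2
        rw [h]
        exact hSstab (a + 1) ha _ ((hv f).1 hf)
      · rw [slc_Rsw hi hf hn]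
        split_ifs
        · exact S.smul_mem _ ((hv f).1 hf)
        · exact S.add_mem ((hv _).1 ((nInner_comp f _).trans hf)) (S.smul_mem _ ((hv f).1 hf))
        · exact S.add_mem ((hv _).1 ((nInner_comp f _).trans hf)) S.zero_mem
    · rw [Rsw_apply hi, (hv f).2 hf, (hv _).2 (fun h => hf ((nInner_comp f _).symm.trans h))]
      simp

lemma le_glue {r m l : ℕ} (hl : l ≤ m) {S : Submodule Kq (TP r m)} (hSV : S ≤ Vsub r m l) :
    S ≤ glue l S := by
  intro v hv f
  refine ⟨fun hf => ?_, fun hf => ?_⟩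
  · by_cases hfg : goodF r m l f
    · rwa [slc_good hfg (hSV hv)]
    · have : slc l f v = 0 := by
        funext g
        by_cases hg : goodF r m l g
        · rw [slc_pos _ _ hg, Pi.zero_apply]
          refine (mem_Vsub v).1 (hSV hv) _ fun h => hfg fun k => ?_
          have hi := asm_inner hf hg k
          refine ⟨fun hk => hi.1 ((h k).1 hk), fun hk => ?_⟩
          have ht := (h k).2 hk
          rwa [asm_neg g (fun h' => (hi.2 h').2 ht)] at ht
        · rw [slc_neg _ _ hg]
          rfl
      rw [this]
      exact S.zero_mem
  · exact (mem_Vsub v).1 (hSV hv) f fun h => hf (nInner_good hl h)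

/-- The part of `glue l S` supported on the base type is `S` itself; it is this that makes the
choice of the operators `ω` irrelevant. -/
lemma glue_inf_Vsub {r m l : ℕ} (hr : 1 ≤ r) (hl : l ≤ m) {S : Submodule Kq (TP r m)}
    {v : TP r m} (hv : v ∈ glue l S) (hv' : v ∈ Vsub r m l) : v ∈ S := by
  have h := baseW_good (m := m) (l := l) hr
  have := (hv _).1 (nInner_good hl h)
  rwa [slc_good h hv'] at this

/-! ### Connectedness of the slices -/

section Connected

variable {r m l : ℕ} {U : Submodule Kq (TP r m)}

lemma slc_zero_swap (hU : ∀ i < m, ∀ v ∈ U, RopN r m i v ∈ U) {p : ℕ} (hp : p + 1 < m)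
    (f : Fin m → Idx r) (hf : nInner f = l) (h : ∀ v ∈ U, slc l f v = 0) :
    ∀ v ∈ U, slc l (f ∘ Equiv.swap ⟨p, by omega⟩ ⟨p+1, hp⟩) v = 0 := by
  intro v hv
  by_cases hn : innerI r (f ⟨p, by omega⟩) ∧ innerI r (f ⟨p+1, hp⟩)
  · rw [slc_congr l (f := f) _ _ v]
    · exact h v hv
    · intro k
      rw [Function.comp_apply, Equiv.swap_apply_def]
      split_ifs with h1 h2
      · subst h1
        exact iff_of_true hn.2 hn.1
      · subst h2
        exact iff_of_true hn.1 hn.2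
      · rfl
    · intro k hk
      rw [Function.comp_apply, Equiv.swap_apply_of_ne_of_ne]
      · rintro rfl
        exact hk hn.1
      · rintro rfl
        exact hk hn.2
  · have h1 := slc_Rsw hp hf hn v
    rw [← RopN_succ, h _ (hU (p + 1) hp v hv), h v hv] at h1
    by_cases he : f ⟨p, by omega⟩ = f ⟨p+1, hp⟩
    · have : f ∘ Equiv.swap ⟨p, by omega⟩ ⟨p+1, hp⟩ = f := by
        funext k
        rw [Function.comp_apply, Equiv.swap_apply_def]
        split_ifs with h1 h2
        · rw [h1, he]
        · rw [h2, he]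
        · rfl
      rw [this]
      exact h v hv
    · simpa [he] using h1.symm

lemma slc_zero_perm (hU : ∀ i < m, ∀ v ∈ U, RopN r m i v ∈ U) (hm : 0 < m)
    (σ : Equiv.Perm (Fin m)) :
    ∀ f : Fin m → Idx r, nInner f = l → (∀ v ∈ U, slc l f v = 0) →
      ∀ v ∈ U, slc l (f ∘ σ) v = 0 := by
  obtain ⟨n, rfl⟩ : ∃ n, m = n + 1 := ⟨m - 1, by omega⟩
  have hσ : σ ∈ Submonoid.closure
      (Set.range fun i : Fin n => Equiv.swap i.castSucc i.succ) := by
    rw [Equiv.Perm.mclosure_swap_castSucc_succ]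
    trivial
  induction hσ using Submonoid.closure_induction with
  | mem x hx =>
    obtain ⟨i, rfl⟩ := hx
    intro f hf h
    exact slc_zero_swap hU (p := i) (by have := i.2; omega) f hf h
  | one =>
    intro f _ h
    exact h
  | mul x y _ _ hx hy =>
    intro f hf h
    exact hy (f ∘ x) ((nInner_comp f x).trans hf) (hx f hf h)

lemma slc_zero_flip (hU : ∀ i < m, ∀ v ∈ U, RopN r m i v ∈ U) (a : Fin m)
    (f : Fin m → Idx r) (hf : nInner f = l) (h : ∀ v ∈ U, slc l f v = 0) :
    ∀ v ∈ U, slc l (Function.update f a (Fin.rev (f a))) v = 0 := by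
  have hm : 0 < m := by
    have := a.2
    omega
  have h0 : ∀ f : Fin m → Idx r, nInner f = l → (∀ v ∈ U, slc l f v = 0) →
      ∀ v ∈ U, slc l (Function.update f ⟨0, hm⟩ (Fin.rev (f ⟨0, hm⟩))) v = 0 := by
    intro f hf h v hv
    by_cases hn : innerI r (f ⟨0, hm⟩)
    · rw [slc_congr l (f := f) (innerI_update_rev f _) _ v]
      · exact h v hv
      · intro k hk
        rw [Function.update_of_ne]
        rintro rfl
        exact hk hn
    · have h1 := slc_R0 (l := l) hm hn v
      rw [← RopN_zero, h _ (hU 0 hm v hv), h v hv] at h1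
      simpa using h1.symm
  -- Conjugating by the transposition of `0` and `a` reduces to the flip at position `0`.
  set s := Equiv.swap (⟨0, hm⟩ : Fin m) a with hs
  have h1 := slc_zero_perm hU hm s f hf h
  have hf1 : nInner (f ∘ s) = l := (nInner_comp f s).trans hf
  have h2 := h0 _ hf1 h1
  have h3 := slc_zero_perm hU hm s _ ((nInner_congr (innerI_update_rev _ _)).trans hf1) h2
  convert h3 using 4
  rw [Function.update_comp_equiv]
  have e1 : s ⟨0, hm⟩ = a := Equiv.swap_apply_left _ _
  have e2 : s.symm ⟨0, hm⟩ = a := by rw [hs, Equiv.symm_swap, Equiv.swap_apply_left]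
  have e3 : (f ∘ s) ∘ s = f := by
    funext k
    simp [hs]
  rw [e2, e3, Function.comp_apply, e1]

lemma slc_zero_flips (hU : ∀ i < m, ∀ v ∈ U, RopN r m i v ∈ U) (A : Finset (Fin m))
    (f : Fin m → Idx r) (hf : nInner f = l) (h : ∀ v ∈ U, slc l f v = 0) :
    ∀ v ∈ U, slc l (fun k => if k ∈ A then Fin.rev (f k) else f k) v = 0 := by
  induction A using Finset.induction_on with
  | empty => simpa using h
  | insert a A ha ih =>
    have hn : nInner (fun k => if k ∈ A then Fin.rev (f k) else f k) = l := by
      rw [← hf]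
      refine nInner_congr fun k => ?_
      split_ifs
      · exact innerI_rev _
      · rfl
    have := slc_zero_flip hU a _ hn ih
    convert this using 5
    funext k
    by_cases hk : k = a
    · subst hk
      simp [ha]
    · simp [hk]

/-- All types with `l` inner positions are connected to the base type by adjacent transpositions
and sign changes of the first letter, so a Hecke-stable subspace with vanishing base slices has
all slices zero. -/
lemma slc_zero_all (hr : 1 ≤ r) (hm : 0 < m) (hl : l ≤ m)
    (hU : ∀ i < m, ∀ v ∈ U, RopN r m i v ∈ U)
    (h : ∀ v ∈ U, slc l (baseW r m l) v = 0) (f : Fin m → Idx r) (hf : nInner f = l) :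
    ∀ v ∈ U, slc l f v = 0 := by
  classical
  have hb := baseW_good (m := m) (l := l) hr
  have hcard : Fintype.card {k // innerI r (f k)} = Fintype.card {k : Fin m // (k : ℕ) < l} := by
    have h1 := nInner_good hl hb
    have h2 := hf.trans h1.symm
    unfold nInner at h2
    simp only [good_inner hb] at h2
    rw [Fintype.card_subtype, Fintype.card_subtype, h2]
  let e := Fintype.equivOfCardEq hcard
  let σ : Equiv.Perm (Fin m) := e.extendSubtype
  have hσ : ∀ k, ((σ k : Fin m) : ℕ) < l ↔ innerI r (f k) := by
    intro k
    by_cases hk : innerI r (f k)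
    · exact iff_of_true (e.extendSubtype_mem k hk) hk
    · exact iff_of_false (e.extendSubtype_not_mem k hk) hk
  have h1 := slc_zero_perm hU hm σ _ (nInner_good hl hb) h
  have h2 := slc_zero_flips hU (Finset.univ.filter fun k => f k = botI r) _
    ((nInner_comp _ σ).trans (nInner_good hl hb)) h1
  intro v hv
  rw [← h2 v hv]
  symm
  apply slc_congr
  · intro k
    have : innerI r ((baseW r m l ∘ σ) k) ↔ innerI r (f k) := by
      rw [Function.comp_apply, good_inner hb, hσ]
    split_ifs
    · rw [innerI_rev, this]
    · exact this
  · intro k hk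
    have ht : (baseW r m l ∘ σ) k = topI r :=
      (hb _).2 (by have := (hσ k).not.2 hk; omega)
    rw [ht]
    by_cases hbot : f k = botI r
    · rw [if_pos (by simp [hbot]), hbot]
      ext
      simp [topI, botI, Fin.val_rev]
    · rw [if_neg (by simp [hbot])]
      by_contra hne
      exact hk ⟨hbot, fun h => hne h.symm⟩

end Connected

/-! ### Decomposition by types -/

open Classical in
/-- The component of `v` in `V̄_{I,J}`. -/
def cut {r m : ℕ} (I J : Finset (Fin m)) (v : TP r m) : TP r m :=
  fun f => if ∀ k, (k ∈ I ↔ innerI r (f k)) ∧ (k ∈ J ↔ f k = botI r) then v f else 0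

lemma sum_cut {r m : ℕ} (v : TP r m) :
    ∑ p : Finset (Fin m) × Finset (Fin m), cut p.1 p.2 v = v := by
  classical
  funext f
  rw [Finset.sum_apply, Finset.sum_eq_single
    (Finset.univ.filter (fun k => innerI r (f k)), Finset.univ.filter (fun k => f k = botI r))]
  · simp [cut]
  · rintro ⟨I, J⟩ - hne
    rw [cut, if_neg]
    intro h
    apply hne
    ext k
    · simp [(h k).1]
    · simp [(h k).2]
  · simp

lemma cut_mem_VIJ {r m : ℕ} (I J : Finset (Fin m)) (v : TP r m) : cut I J v ∈ VIJ r m I J := by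
  refine (mem_span_Mf _ _).2 fun f hf => ?_
  rw [cut, if_neg]
  refine fun h => hf fun k => ⟨(h k).1.1, (h k).2.1, fun h1 h2 => ?_⟩
  by_contra h3
  exact h1 ((h k).1.2 ⟨fun h4 => h2 ((h k).2.2 h4), h3⟩)

lemma cut_mem_glue {r m l : ℕ} {S : Submodule Kq (TP r m)} (I J : Finset (Fin m)) {v : TP r m}
    (hv : v ∈ glue l S) : cut I J v ∈ glue l S := by
  intro f
  refine ⟨fun hf => ?_, fun hf => ?_⟩
  · have key : ∀ g, goodF r m l g →
        ((∀ k, (k ∈ I ↔ innerI r (asm f g k)) ∧ (k ∈ J ↔ asm f g k = botI r)) ↔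
          (∀ k, (k ∈ I ↔ innerI r (f k)) ∧ (k ∈ J ↔ f k = botI r))) := by
      intro g hg
      refine forall_congr' fun k => ?_
      have hi := asm_inner hf hg k
      rw [hi]
      by_cases hk : innerI r (f k)
      · have h1 : asm f g k ≠ botI r := (hi.2 hk).1
        simp [h1, hk.1]
      · rw [asm_neg g hk]
    by_cases h : ∀ k, (k ∈ I ↔ innerI r (f k)) ∧ (k ∈ J ↔ f k = botI r)
    · have : slc l f (cut I J v) = slc l f v := by
        funext g
        by_cases hg : goodF r m l g
        · rw [slc_pos _ _ hg, slc_pos _ _ hg, cut, if_pos ((key g hg).2 h)]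
        · rw [slc_neg _ _ hg, slc_neg _ _ hg]
      rw [this]
      exact (hv f).1 hf
    · have : slc l f (cut I J v) = 0 := by
        funext g
        by_cases hg : goodF r m l g
        · rw [slc_pos _ _ hg, cut, if_neg (fun h' => h ((key g hg).1 h'))]
          rfl
        · rw [slc_neg _ _ hg]
          rfl
      rw [this]
      exact S.zero_mem
  · rw [cut, (hv f).2 hf]
    split_ifs <;> rfl

lemma cut_eq_zero {r m l : ℕ} {S : Submodule Kq (TP r m)} {I J : Finset (Fin m)} {v : TP r m}
    (hv : v ∈ glue l S) (h : ¬ (Disjoint I J ∧ I.card = l)) : cut I J v = 0 := by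
  classical
  funext f
  by_cases hf : ∀ k, (k ∈ I ↔ innerI r (f k)) ∧ (k ∈ J ↔ f k = botI r)
  · rw [cut, if_pos hf]
    refine (hv f).2 fun hn => h ⟨?_, ?_⟩
    · rw [Finset.disjoint_left]
      intro k h1 h2
      exact ((hf k).1.1 h1).1 ((hf k).2.1 h2)
    · rw [← hn, nInner]
      congr 1
      ext k
      simp [(hf k).1]
  · rw [cut, if_neg hf]
    rfl

/-! ### Stable subspaces -/

/-- In finite dimension, a subspace stable under an invertible operator is stable under its
inverse. -/
lemma inv_stable {r m : ℕ} {W : Submodule Kq (TP r m)} {A B : Module.End Kq (TP r m)}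
    (hBA : B * A = 1) (hA : ∀ v ∈ W, A v ∈ W) : ∀ v ∈ W, B v ∈ W := by
  have hBA' : ∀ x, B (A x) = x := fun x => LinearMap.congr_fun hBA x
  have hinj : Function.Injective (A.restrict hA) := by
    intro x y hxy
    have : A x = A y := congrArg Subtype.val hxy
    apply Subtype.ext
    rw [← hBA' x, this, hBA']
  intro v hv
  obtain ⟨w, hw⟩ := LinearMap.injective_iff_surjective.1 hinj ⟨v, hv⟩
  have hw' : A w = v := congrArg Subtype.val hw
  rw [← hw', hBA']
  exact w.2

lemma word_stable {r m : ℕ} {W : Submodule Kq (TP r m)}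
    (hW : ∀ i < m, ∀ v ∈ W, RopN r m i v ∈ W) {A : Module.End Kq (TP r m)}
    (hA : IsRWord r m A) : ∀ v ∈ W, A v ∈ W := by
  obtain ⟨ws, rfl, hws⟩ := hA
  induction ws with
  | nil => exact fun v hv => hv
  | cons u ws ih =>
    intro v hv
    rw [List.prod_cons]
    have h1 := ih (fun u' hu' => hws u' (List.mem_cons_of_mem _ hu')) v hv
    obtain ⟨i, hi, rfl | ⟨h2, -⟩⟩ := hws u List.mem_cons_self
    · exact hW i hi _ h1
    · exact inv_stable h2 (hW i hi) _ h1

lemma permWordAux_lt {l : ℕ} (n : ℕ) (σ : Equiv.Perm (Fin l)) :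
    ∀ p ∈ permWordAux n σ, p + 1 < l := by
  induction n generalizing σ with
  | zero => simp [permWordAux]
  | succ n ih =>
    intro p hp
    rw [permWordAux] at hp
    split at hp
    · simp at hp
    · rename_i a ha
      rcases List.mem_append.1 hp with h | h
      · exact ih _ _ h
      · rw [List.mem_singleton] at h
        subst h
        have := List.find?_some ha
        by_contra hlt
        simp [hlt] at this

lemma opPerm_stable {r m l : ℕ} {W : Submodule Kq (TP r m)}
    (hW : ∀ i < l, ∀ v ∈ W, RopN r m i v ∈ W) (σ : Equiv.Perm (Fin l)) :
    ∀ v ∈ W, opPerm r m σ v ∈ W := by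
  have key : ∀ L : List ℕ, (∀ p ∈ L, p + 1 < l) →
      ∀ v ∈ W, (L.map (fun p => RopN r m (p+1))).prod v ∈ W := by
    intro L hL
    induction L with
    | nil => exact fun v hv => hv
    | cons a L ih =>
      intro v hv
      rw [List.map_cons, List.prod_cons]
      exact hW _ (hL a List.mem_cons_self) _
        (ih (fun p hp => hL p (List.mem_cons_of_mem _ hp)) v hv)
  unfold opPerm
  rw [← List.map_reverse]
  exact key _ fun p hp => permWordAux_lt _ σ p (List.mem_reverse.1 hp)

lemma opPerm_one (r m l : ℕ) : opPerm r m (1 : Equiv.Perm (Fin l)) = 1 := by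
  have h : lenPerm (1 : Equiv.Perm (Fin l)) = 0 := by
    rw [lenPerm, Finset.card_eq_zero, Finset.filter_eq_empty_iff]
    rintro p - ⟨h1, h2⟩
    exact lt_asymm h1 h2
  simp [opPerm, permWord, h, permWordAux]

/-- Stability under the generators implies stability under the whole duplex Hecke algebra. -/
lemma duplex_stable {r m : ℕ} (Xi : DuplexH m →ₐ[Kq] (Module.End Kq (TP r m))ᵐᵒᵖ)
    {W : Submodule Kq (TP r m)}
    (hT : ∀ i : Fin m, ∀ v ∈ W, (Xi (Tg m i)).unop v ∈ W)
    (hX : ∀ (l' : Fin (m+1)) (σ : Equiv.Perm (Fin (l' : ℕ))), ∀ v ∈ W,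
      (Xi (Xg m l' σ)).unop v ∈ W) (h : DuplexH m) : ∀ v ∈ W, (Xi h).unop v ∈ W := by
  obtain ⟨a, rfl⟩ := RingQuot.mkAlgHom_surjective Kq (DHrel m) h
  induction a using FreeAlgebra.induction with
  | grade0 c =>
    intro v hv
    rw [AlgHom.commutes, AlgHom.commutes]
    exact W.smul_mem c hv
  | grade1 x =>
    rcases x with i | ⟨l', σ⟩
    · exact hT i
    · exact hX l' σ
  | mul a b ha hb =>
    intro v hv
    rw [map_mul, map_mul, MulOpposite.unop_mul]
    exact hb _ (ha v hv)
  | add a b ha hb =>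
    intro v hv
    rw [map_add, map_add, MulOpposite.unop_add]
    exact W.add_mem (ha v hv) (hb v hv)

/-- The generators `x_σ^{(l')}` act through the base slice, that is, through the projection onto
`V^{⊗l'} ⊗ η_{r+3/2}^{⊗(m-l')}`. -/
lemma Xg_apply {r m l : ℕ} (hr : 1 ≤ r) {A P : Module.End Kq (TP r m)}
    (h1 : ∀ v ∈ Vsub r m l, A v = P v)
    (h0 : ∀ f : Fin m → Idx r, ¬ goodF r m l f → A (Mf f) = 0) (v : TP r m) :
    A v = P (slc l (baseW r m l) v) := by
  have hb := baseW_good (m := m) (l := l) hr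
  rw [← h1 _ (slc_mem_Vsub _ v), ← sub_eq_zero, ← map_sub]
  have hs : v - slc l (baseW r m l) v ∈
      Submodule.span Kq {v : TP r m | ∃ f, ¬ goodF r m l f ∧ v = Mf f} := by
    rw [mem_span_Mf]
    intro f hf
    rw [not_not] at hf
    rw [Pi.sub_apply, slc_pos _ _ hf, asm_good hb hf, sub_self]
  have hle : Submodule.span Kq {v : TP r m | ∃ f, ¬ goodF r m l f ∧ v = Mf f} ≤
      LinearMap.ker A := by
    rw [Submodule.span_le]
    rintro _ ⟨f, hf, rfl⟩
    exact h0 f hf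
  exact hle hs

/-- The sum defining the duplex submodule does not depend on `ω`. -/
lemma iSup_eq_glue {r m l : ℕ} (hr : 1 ≤ r) (hl : l ≤ m) {S : Submodule Kq (TP r m)}
    (hSV : S ≤ Vsub r m l) (hSstab : ∀ i : ℕ, i < l → ∀ v ∈ S, RopN r m i v ∈ S)
    (ω : Finset (Fin m) → Finset (Fin m) →
      Module.End Kq (TP r m) × Module.End Kq (TP r m))
    (hω : ∀ I J : Finset (Fin m), Disjoint I J → I.card = l →
      IsRWord r m (ω I J).1 ∧ (ω I J).1 * (ω I J).2 = 1 ∧ (ω I J).2 * (ω I J).1 = 1 ∧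
      Submodule.map (ω I J).1 (VIJ r m I J) = Vsub r m l) :
    (⨆ (I : Finset (Fin m)) (J : Finset (Fin m)) (_ : Disjoint I J ∧ I.card = l),
        Submodule.map (ω I J).2 S) = glue l S := by
  have hG := glue_RopN hSstab
  apply le_antisymm
  · refine iSup_le fun I => iSup_le fun J => iSup_le fun hIJ => ?_
    rintro _ ⟨v, hv, rfl⟩
    obtain ⟨h1, -, h3, -⟩ := hω I J hIJ.1 hIJ.2
    exact inv_stable h3 (word_stable hG h1) v (le_glue hl hSV hv)
  · intro v hv
    rw [← sum_cut v]
    refine Submodule.sum_mem _ fun p _ => ?_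
    by_cases hp : Disjoint p.1 p.2 ∧ p.1.card = l
    · obtain ⟨h1, -, h3, h4⟩ := hω p.1 p.2 hp.1 hp.2
      refine Submodule.mem_iSup_of_mem p.1 (Submodule.mem_iSup_of_mem p.2
        (Submodule.mem_iSup_of_mem hp ⟨(ω p.1 p.2).1 (cut p.1 p.2 v), ?_,
          LinearMap.congr_fun h3 _⟩))
      refine glue_inf_Vsub hr hl (word_stable hG h1 _ (cut_mem_glue _ _ hv)) ?_
      rw [← h4]
      exact Submodule.mem_map_of_mem (cut_mem_VIJ _ _ _)
    · rw [cut_eq_zero hv hp]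
      exact Submodule.zero_mem _

/-! ### Simplicity -/

/-- **Lemma 3.5.** If `S ⊆ V^{⊗l} ⊗ η^{⊗(m-l)}` is a simple `H(B_l)`-submodule under
`Ψ_l^V`, then `D = Σ_{I,J} Ψ(ω_{I,J}⁻¹)(S)` is a simple `𝓗_m`-submodule of `V̄^⊗m`
under `Ξ`. Here, for each pair `(I, J)` with `#I = l`, `ω I J = (Ψ(ω_{I,J}), Ψ(ω_{I,J}⁻¹))`
is a fixed pair of mutually inverse operators, with `Ψ(ω_{I,J})` a product of the
`Ψ(H_i)^{±1}` carrying `V̄_{I,J}` onto `V^{⊗l} ⊗ η^{⊗(m-l)}`, and `ω_{{1,…,l},∅} = 1`. -/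
theorem simple_duplex_submodule (r m l : ℕ) (hr : 1 ≤ r) (hm : 2 ≤ m) (hl : l ≤ m)
    (Xi : DuplexH m →ₐ[Kq] (Module.End Kq (TP r m))ᵐᵒᵖ)
    (hXiT : ∀ i : Fin m, (Xi (Tg m i)).unop = RopN r m (i : ℕ))
    (hXix : ∀ (l' : Fin (m+1)) (σ : Equiv.Perm (Fin (l' : ℕ))),
      ∀ v ∈ Vsub r m (l' : ℕ), (Xi (Xg m l' σ)).unop v = opPerm r m σ v)
    (hXix0 : ∀ (l' : Fin (m+1)) (σ : Equiv.Perm (Fin (l' : ℕ))) (f : Fin m → Idx r),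
      ¬ goodF r m (l' : ℕ) f → (Xi (Xg m l' σ)).unop (Mf f) = 0)
    (S : Submodule Kq (TP r m)) (hS0 : S ≠ ⊥) (hSV : S ≤ Vsub r m l)
    (hSstab : ∀ i : ℕ, i < l → ∀ v ∈ S, RopN r m i v ∈ S)
    (hSsimple : ∀ U : Submodule Kq (TP r m), U ≤ S →
      (∀ i : ℕ, i < l → ∀ v ∈ U, RopN r m i v ∈ U) → U = ⊥ ∨ U = S)
    (ω : Finset (Fin m) → Finset (Fin m) →
      Module.End Kq (TP r m) × Module.End Kq (TP r m))
    (hω : ∀ I J : Finset (Fin m), Disjoint I J → I.card = l →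
      IsRWord r m (ω I J).1 ∧ (ω I J).1 * (ω I J).2 = 1 ∧ (ω I J).2 * (ω I J).1 = 1 ∧
      Submodule.map (ω I J).1 (VIJ r m I J) = Vsub r m l)
    (hω1 : ω (Finset.univ.filter (fun k : Fin m => (k : ℕ) < l)) ∅ = (1, 1)) :
    (⨆ (I : Finset (Fin m)) (J : Finset (Fin m)) (_ : Disjoint I J ∧ I.card = l),
        Submodule.map (ω I J).2 S) ≠ ⊥ ∧
    (∀ (h : DuplexH m) (v : TP r m),
      v ∈ (⨆ (I : Finset (Fin m)) (J : Finset (Fin m)) (_ : Disjoint I J ∧ I.card = l),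
            Submodule.map (ω I J).2 S) →
      (Xi h).unop v ∈
        (⨆ (I : Finset (Fin m)) (J : Finset (Fin m)) (_ : Disjoint I J ∧ I.card = l),
          Submodule.map (ω I J).2 S)) ∧
    (∀ U : Submodule Kq (TP r m),
      U ≤ (⨆ (I : Finset (Fin m)) (J : Finset (Fin m)) (_ : Disjoint I J ∧ I.card = l),
            Submodule.map (ω I J).2 S) →
      (∀ (h : DuplexH m) (v : TP r m), v ∈ U → (Xi h).unop v ∈ U) →
      U = ⊥ ∨ U = (⨆ (I : Finset (Fin m)) (J : Finset (Fin m))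
            (_ : Disjoint I J ∧ I.card = l), Submodule.map (ω I J).2 S)) := by
  have hD := iSup_eq_glue hr hl hSV hSstab ω hω
  rw [hD]
  have hG := glue_RopN hSstab
  have hb := baseW_good (m := m) (l := l) hr
  have hX : ∀ (l' : Fin (m+1)) (σ : Equiv.Perm (Fin (l' : ℕ))) (v : TP r m),
      (Xi (Xg m l' σ)).unop v = opPerm r m σ (slc (l' : ℕ) (baseW r m l') v) :=
    fun l' σ v => Xg_apply hr (hXix l' σ) (hXix0 l' σ) v
  refine ⟨?_, ?_, ?_⟩
  · intro h
    exact hS0 (le_bot_iff.1 (h ▸ le_glue hl hSV))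
  · intro h
    refine duplex_stable Xi (fun i v hv => ?_) (fun l' σ v hv => ?_) h
    · rw [hXiT]
      exact hG i i.2 v hv
    · rw [hX]
      by_cases hll : (l' : ℕ) = l
      · have hs : slc (l' : ℕ) (baseW r m l') v ∈ S := by
          rw [hll]
          exact (hv _).1 (nInner_good hl hb)
        exact le_glue hl hSV (opPerm_stable (fun i hi => hSstab i (by omega)) σ _ hs)
      · have hs : slc (l' : ℕ) (baseW r m l') v = 0 := by
          have hb' := baseW_good (m := m) (l := l') hr
          funext g
          by_cases hg : goodF r m l' g
          · rw [slc_pos _ _ hg, asm_good hb' hg]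
            refine (hv g).2 fun hn => hll ?_
            rw [← hn, nInner_good (by have := l'.2; omega) hg]
          · rw [slc_neg _ _ hg]
            rfl
        rw [hs, map_zero]
        exact Submodule.zero_mem _
  · intro U hU hUst
    by_cases hU0 : U = ⊥
    · exact Or.inl hU0
    right
    have hUR : ∀ i < m, ∀ v ∈ U, RopN r m i v ∈ U := by
      intro i hi v hv
      have := hUst (Tg m ⟨i, hi⟩) v hv
      rwa [hXiT] at this
    have hproj : ∀ v ∈ U, slc l (baseW r m l) v ∈ U := by
      intro v hv
      have := hUst (Xg m ⟨l, by omega⟩ 1) v hv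
      rw [hX, opPerm_one] at this
      exact this
    -- `U ⊓ S` is nonzero, for otherwise all base slices of `U` vanish, hence all slices.
    have hne : U ⊓ S ≠ ⊥ := by
      intro hbot
      apply hU0
      rw [Submodule.eq_bot_iff]
      intro v hv
      have hz : ∀ w ∈ U, slc l (baseW r m l) w = 0 := by
        intro w hw
        have : slc l (baseW r m l) w ∈ U ⊓ S :=
          ⟨hproj w hw, (hU hw _).1 (nInner_good hl hb)⟩
        rwa [hbot, Submodule.mem_bot] at this
      funext f
      by_cases hf : nInner f = l
      · obtain ⟨g, hg, hgf⟩ := exists_asm hr hf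
        have h1 := slc_zero_all hr (by omega) hl hUR hz f hf v hv
        have h2 := congrFun h1 g
        rwa [slc_pos _ _ hg, hgf] at h2
      · exact (hU hv f).2 hf
    have hSU : S ≤ U := by
      rcases hSsimple (U ⊓ S) inf_le_right
        (fun i hi v hv => ⟨hUR i (by omega) v hv.1, hSstab i hi v hv.2⟩) with h | h
      · exact absurd h hne
      · exact inf_eq_right.1 h
    refine le_antisymm hU ?_
    rw [← hD]
    refine iSup_le fun I => iSup_le fun J => iSup_le fun hIJ => ?_
    rintro _ ⟨v, hv, rfl⟩
    obtain ⟨h1, -, h3, -⟩ := hω I J hIJ.1 hIJ.2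
    exact inv_stable h3 (word_stable hUR h1) v (hSU hv)
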